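/- arXiv:1408.4747 — 4 statements merged into one kernel-verified Lean document; each statement's English description precedes it below -/
import Mathlib

section
/- Let (ξ_n)_{n≥1} be i.i.d. integrable real random variables with E[ξ_1] > 0, let μ > 0, h ∈ [0,∞), A > 0, and w ≥ 0, and let (W_n)_{n≥0} be the DE-CuSum sequence started at w (defined pathwise from (ξ_n)). Define τ_A = inf{n ≥ 1 : W_n > A} and τ_{<0} = inf{n ≥ 1 : W_n < 0} (values in ℕ ∪ {∞}). Then ℙ(τ_A < τ_{<0}) ≥ ℙ(S_n ≥ 0 for all n ≥ 1), i.e., the probability that the DE-CuSum statistic crosses the threshold A before ever going below 0 is at least the probability that the random walk of partial sums stays nonnegative forever. -/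
/-!
While `w + S_n` stays nonnegative, neither the upward drift `μ` nor the truncation at `-h` comes
into play, so `W_n = w + S_n` and `τ_{<0} = ∞`. By the strong law of large numbers `S_n → ∞` almost
surely, so on the event that `w + S_n ≥ 0` for all `n`, `W` also crosses every threshold `A`.
-/

open MeasureTheory Filter Set ProbabilityTheory
open scoped ENNReal

/-- DE-CuSum sequence with parameters `μ > 0` and `h ∈ [0,∞)`, started at `w`:
`W_{n+1} = min (W_n + μ) 0` if `W_n < 0`, and `W_{n+1} = max (W_n + ξ_{n+1}) (-h)` if `W_n ≥ 0`. -/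
noncomputable def deCusum (ξ : ℕ → ℝ) (μ h w : ℝ) : ℕ → ℝ
  | 0 => w
  | n + 1 =>
    if deCusum ξ μ h w n < 0 then min (deCusum ξ μ h w n + μ) 0
    else max (deCusum ξ μ h w n + ξ n) (-h)
/-- Partial sum `S_n = ξ_1 + ⋯ + ξ_n` (with the increments indexed from `0`), `S_0 = 0`. -/
def psum (ξ : ℕ → ℝ) (n : ℕ) : ℝ := ∑ k ∈ Finset.range n, ξ k
/-- First time `n ≥ 1` at which `P n` holds, valued in `ℕ∞` with `inf ∅ = ∞`. -/
noncomputable def firstTime (P : ℕ → Prop) : ℕ∞ :=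
  sInf ((↑) '' {n : ℕ | 1 ≤ n ∧ P n})

section FirstTime

variable {p : ℕ → Prop}

lemma firstTime_le {n : ℕ} (hn : 1 ≤ n) (hp : p n) : firstTime p ≤ n :=
  sInf_le ⟨n, ⟨hn, hp⟩, rfl⟩

lemma firstTime_eq_top_iff : firstTime p = ⊤ ↔ ∀ n, 1 ≤ n → ¬ p n := by
  rw [firstTime, sInf_eq_top, forall_mem_image]
  simp

end FirstTime

section Path

variable {ξ : ℕ → ℝ} {h w : ℝ}

lemma psum_succ (ξ : ℕ → ℝ) (n : ℕ) : psum ξ (n + 1) = psum ξ n + ξ n :=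
  Finset.sum_range_succ ξ n

lemma psum_nonneg_of_one_le (hS : ∀ n, 1 ≤ n → 0 ≤ psum ξ n) : ∀ n, 0 ≤ psum ξ n
  | 0 => Finset.sum_range_zero ξ |>.ge
  | n + 1 => hS (n + 1) n.succ_pos

lemma deCusum_eq_add_psum (μ : ℝ) (hh : 0 ≤ h) {n : ℕ} (hS : ∀ m ≤ n, 0 ≤ w + psum ξ m) :
    deCusum ξ μ h w n = w + psum ξ n := by
  induction n with
  | zero => simp [deCusum, psum]
  | succ n ih =>
    have hW : deCusum ξ μ h w n = w + psum ξ n := ih fun m hm => hS m (hm.trans n.le_succ)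
    have hn : 0 ≤ w + psum ξ n := hS n n.le_succ
    have hn' : 0 ≤ w + psum ξ n + ξ n := by simpa only [psum_succ, add_assoc] using hS _ le_rfl
    rw [deCusum, hW, if_neg hn.not_gt, max_eq_left ((neg_nonpos.2 hh).trans hn'), psum_succ,
      add_assoc]

lemma firstTime_deCusum_gt_lt_firstTime_deCusum_neg (μ : ℝ) {A : ℝ} (hh : 0 ≤ h)
    (hS : ∀ n, 0 ≤ w + psum ξ n) (hA : ∃ n, 1 ≤ n ∧ A < w + psum ξ n) :
    firstTime (fun n => A < deCusum ξ μ h w n) < firstTime (fun n => deCusum ξ μ h w n < 0) := by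
  have hW (n : ℕ) : deCusum ξ μ h w n = w + psum ξ n := deCusum_eq_add_psum μ hh fun m _ => hS m
  have hneg : firstTime (fun n => deCusum ξ μ h w n < 0) = ⊤ :=
    firstTime_eq_top_iff.2 fun n _ => by simpa only [hW, not_lt] using hS n
  obtain ⟨n, hn, hAn⟩ := hA
  calc firstTime (fun n => A < deCusum ξ μ h w n)
    _ ≤ n := firstTime_le hn (by rwa [hW])
    _ < ⊤ := ENat.natCast_lt_top n
    _ = firstTime (fun n => deCusum ξ μ h w n < 0) := hneg.symm

end Path

section RandomWalk

variable {Ω : Type*} [MeasurableSpace Ω] {P : Measure Ω} {ξ : ℕ → Ω → ℝ}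

lemma ae_tendsto_psum_atTop (hindep : Pairwise fun i j => IndepFun (ξ i) (ξ j) P)
    (hid : ∀ n, IdentDistrib (ξ n) (ξ 0) P P) (hint : Integrable (ξ 0) P)
    (hmean : 0 < ∫ ω, ξ 0 ω ∂P) :
    ∀ᵐ ω ∂P, Tendsto (psum fun k => ξ k ω) atTop atTop := by
  filter_upwards [strong_law_ae_real ξ hint hindep hid] with ω hlim
  exact tendsto_natCast_atTop_atTop.num hmean hlim

theorem deCusum_cross_prob_ge_general
    (hindep : Pairwise fun i j => IndepFun (ξ i) (ξ j) P)
    (hid : ∀ n, IdentDistrib (ξ n) (ξ 0) P P)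
    (hint : Integrable (ξ 0) P) (hmean : 0 < ∫ ω, ξ 0 ω ∂P)
    (μ h w A : ℝ) (hh : 0 ≤ h) :
    P {ω | ∀ n : ℕ, 0 ≤ w + psum (fun k => ξ k ω) n} ≤
      P {ω | firstTime (fun n => A < deCusum (fun k => ξ k ω) μ h w n) <
             firstTime (fun n => deCusum (fun k => ξ k ω) μ h w n < 0)} := by
  refine measure_mono_ae ?_
  filter_upwards [ae_tendsto_psum_atTop hindep hid hint hmean] with ω hlim hS
  have hcross : ∀ᶠ n in atTop, A < w + psum (fun k => ξ k ω) n :=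
    (tendsto_atTop_add_const_left _ w hlim).eventually_gt_atTop A
  exact firstTime_deCusum_gt_lt_firstTime_deCusum_neg μ hh hS
    ((eventually_ge_atTop 1).and hcross).exists

end RandomWalk

/-- For i.i.d. integrable increments with positive mean, the probability that the DE-CuSum
statistic started at `w ≥ 0` crosses the threshold `A > 0` before ever going below `0` is at
least the probability that the random walk of partial sums stays nonnegative forever. -/
theorem deCusum_cross_prob_ge {Ω : Type*} [MeasurableSpace Ω] (P : Measure Ω)
    [IsProbabilityMeasure P] (ξ : ℕ → Ω → ℝ) (hmeas : ∀ n, Measurable (ξ n))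
    (hindep : iIndepFun ξ P)
    (hid : ∀ n, IdentDistrib (ξ n) (ξ 0) P P)
    (hint : Integrable (ξ 0) P) (hmean : 0 < ∫ ω, ξ 0 ω ∂P)
    (μ h w A : ℝ) (hμ : 0 < μ) (hh : 0 ≤ h) (hw : 0 ≤ w) (hA : 0 < A) :
    P {ω | ∀ n : ℕ, 1 ≤ n → 0 ≤ psum (fun k => ξ k ω) n} ≤
      P {ω | firstTime (fun n => A < deCusum (fun k => ξ k ω) μ h w n) <
             firstTime (fun n => deCusum (fun k => ξ k ω) μ h w n < 0)} := by
  refine (measure_mono fun ω hS n => ?_).trans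
    (deCusum_cross_prob_ge_general (fun _ _ => hindep.indepFun) hid hint hmean μ h w A hh)
  exact add_nonneg hw (psum_nonneg_of_one_le hS n)
end

section
/- Let (ξ_n)_{n≥1} be i.i.d. integrable real random variables with E[ξ_1] > 0, let μ > 0, h ∈ [0,∞), A ≥ 0, and w ∈ [−h,∞), and let (W_n)_{n≥0} be the DE-CuSum sequence started at w with τ_A = inf{n ≥ 1 : W_n > A}. Then the expected total time the statistic spends below 0 before crossing the threshold satisfies E[#{n ≥ 0 : n < τ_A, W_n < 0}] ≤ ⌈h/μ⌉ / q, where q = ℙ(S_n ≥ 0 for all n ≥ 1). This bound does not depend on w or on the threshold A. -/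
open MeasureTheory Filter Set ProbabilityTheory
open scoped ENNReal

/-!
Call `n` an exit time if `W n < 0 ≤ W (n + 1)`. Below `0` the statistic climbs by `μ` from a
level at least `-h`, so from every time spent below `0` it reaches an exit time in fewer than
`⌈h / μ⌉` steps; hence the time spent below `0` is at most `⌈h / μ⌉` times the number of exits.

If the increments after an exit time have nonnegative partial sums, the statistic never becomes
negative again, so that exit is the last one. Each exit is independent of the increments after it,
which are distributed as the whole sequence, so the expected number of last exits is `q` times the
expected number of exits. There is at most one last exit, so the expected number of exits is at
most `1 / q`.
-/

/-- The exit times of a real sequence from the negative half-line: the last instants of its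
excursions below `0`. -/
def exitTimes (W : ℕ → ℝ) : Set ℕ := {n | W n < 0 ∧ 0 ≤ W (n + 1)}

/-- The increment sequences whose random walk started at `0` never becomes negative. -/
def nonnegWalks : Set (ℕ → ℝ) := {x | ∀ n, 1 ≤ n → 0 ≤ psum x n}

theorem encard_le_mul_encard_of_forall_exists_add_mem {s t : Set ℕ} {K : ℕ}
    (hst : ∀ n ∈ s, ∃ j < K, n + j ∈ t) : s.encard ≤ K * t.encard := by
  have hsub : s ⊆ (fun p : ℕ × ℕ => p.2 - p.1) '' (Iio K ×ˢ t) := fun n hn =>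
    let ⟨j, hj, hjt⟩ := hst n hn
    ⟨(j, n + j), ⟨hj, hjt⟩, Nat.add_sub_cancel _ _⟩
  calc s.encard ≤ (Iio K ×ˢ t).encard := (encard_le_encard hsub).trans (encard_image_le _ _)
    _ = K * t.encard := by rw [encard_prod, ← Finset.coe_Iio, encard_coe_eq_coe_finsetCard,
        Nat.card_Iio]

section Pathwise

variable {ξ : ℕ → ℝ} {μ h w : ℝ} {n : ℕ}

theorem deCusum_succ_of_neg (hn : deCusum ξ μ h w n < 0) :
    deCusum ξ μ h w (n + 1) = min (deCusum ξ μ h w n + μ) 0 :=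
  if_pos hn

theorem deCusum_succ_of_nonneg (hn : 0 ≤ deCusum ξ μ h w n) :
    deCusum ξ μ h w (n + 1) = max (deCusum ξ μ h w n + ξ n) (-h) :=
  if_neg hn.not_gt

theorem neg_le_deCusum (hμ : 0 ≤ μ) (hw : -h ≤ w) (n : ℕ) : -h ≤ deCusum ξ μ h w n := by
  induction n with
  | zero => exact hw
  | succ n ih =>
    rcases lt_or_ge (deCusum ξ μ h w n) 0 with hn | hn
    · rw [deCusum_succ_of_neg hn]
      exact le_min (by linarith) (by linarith)
    · rw [deCusum_succ_of_nonneg hn]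
      exact le_max_right _ _

theorem exists_add_mem_exitTimes (k : ℕ) (hn : deCusum ξ μ h w n < 0)
    (hk : 0 ≤ deCusum ξ μ h w n + k * μ) : ∃ j < k, n + j ∈ exitTimes (deCusum ξ μ h w) := by
  induction k generalizing n with
  | zero =>
    simp only [Nat.cast_zero, zero_mul, add_zero] at hk
    exact absurd hn hk.not_gt
  | succ k ih =>
    have hstep := deCusum_succ_of_neg hn
    rcases le_or_gt 0 (deCusum ξ μ h w n + μ) with hμ | hμ
    · exact ⟨0, k.succ_pos, hn, (hstep.trans (min_eq_right hμ)).ge⟩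
    · rw [min_eq_left hμ.le] at hstep
      have hk' : 0 ≤ deCusum ξ μ h w (n + 1) + k * μ := by
        push_cast at hk
        linarith
      obtain ⟨j, hj, hmem⟩ := ih (hstep.trans_lt hμ) hk'
      exact ⟨j + 1, by lia, by rwa [← add_assoc, add_right_comm]⟩

theorem encard_deCusum_neg_le (hμ : 0 < μ) (hw : -h ≤ w) :
    {n | deCusum ξ μ h w n < 0}.encard ≤
      (⌈h / μ⌉₊ : ℕ∞) * (exitTimes (deCusum ξ μ h w)).encard := by
  refine encard_le_mul_encard_of_forall_exists_add_mem fun n hn => exists_add_mem_exitTimes _ hn ?_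
  have hceil : h ≤ ⌈h / μ⌉₊ * μ := (div_le_iff₀ hμ).1 (Nat.le_ceil _)
  linarith [neg_le_deCusum (ξ := ξ) hμ.le hw n]

theorem psum_nonneg_of_mem_nonnegWalks {x : ℕ → ℝ} (hx : x ∈ nonnegWalks) (m : ℕ) :
    0 ≤ psum x m := by
  rcases m.eq_zero_or_pos with rfl | hm
  · exact Finset.sum_range_zero x |>.ge
  · exact hx m hm

theorem psum_le_deCusum_add (hn : 0 ≤ deCusum ξ μ h w n)
    (hξ : (fun k => ξ (n + k)) ∈ nonnegWalks) (m : ℕ) :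
    psum (fun k => ξ (n + k)) m ≤ deCusum ξ μ h w (n + m) := by
  induction m with
  | zero => simpa [psum] using hn
  | succ m ih =>
    have hm : 0 ≤ deCusum ξ μ h w (n + m) := (psum_nonneg_of_mem_nonnegWalks hξ m).trans ih
    calc psum (fun k => ξ (n + k)) (m + 1) = psum (fun k => ξ (n + k)) m + ξ (n + m) :=
          Finset.sum_range_succ _ _
      _ ≤ deCusum ξ μ h w (n + m) + ξ (n + m) := by gcongr
      _ ≤ deCusum ξ μ h w (n + m + 1) := by
          rw [deCusum_succ_of_nonneg hm]
          exact le_max_left _ _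

theorem subsingleton_exitTimes_followed_by_nonnegWalk (ξ : ℕ → ℝ) (μ h w : ℝ) :
    {n | n ∈ exitTimes (deCusum ξ μ h w) ∧
      (fun k => ξ (n + 1 + k)) ∈ nonnegWalks}.Subsingleton := by
  have not_later {i j : ℕ} (hi : i ∈ exitTimes (deCusum ξ μ h w))
      (hiξ : (fun k => ξ (i + 1 + k)) ∈ nonnegWalks)
      (hj : j ∈ exitTimes (deCusum ξ μ h w)) : j ≤ i := by
    by_contra! hij
    obtain ⟨m, rfl⟩ := Nat.exists_eq_add_of_le (Nat.succ_le_of_lt hij)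
    exact hj.1.not_ge
      ((psum_nonneg_of_mem_nonnegWalks hiξ m).trans (psum_le_deCusum_add hi.2 hiξ m))
  exact fun i hi j hj => le_antisymm (not_later hj.1 hj.2 hi.1) (not_later hi.1 hi.2 hj.1)

end Pathwise

section Measurability

theorem measurable_psum (n : ℕ) : Measurable fun x : ℕ → ℝ => psum x n :=
  Finset.measurable_fun_sum _ fun i _ => measurable_pi_apply i

theorem measurableSet_nonnegWalks : MeasurableSet nonnegWalks := by
  simp only [nonnegWalks, ofPred_forall]
  exact .iInter fun n => .iInter fun _ => measurableSet_le measurable_const (measurable_psum n)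

variable {Ω : Type*} [MeasurableSpace Ω] {ξ : ℕ → Ω → ℝ} {n : ℕ}

theorem measurable_deCusum (hξ : ∀ i < n, Measurable (ξ i)) (μ h w : ℝ) :
    Measurable fun ω => deCusum (fun k => ξ k ω) μ h w n := by
  induction n with
  | zero => exact measurable_const
  | succ n ih =>
    have hn := ih fun i hi => hξ i (hi.trans n.lt_succ_self)
    exact Measurable.ite (measurableSet_lt hn measurable_const)
      ((hn.add_const μ).min measurable_const)
      ((hn.add (hξ n n.lt_succ_self)).max measurable_const)

theorem measurableSet_mem_exitTimes_deCusum (hξ : ∀ i ≤ n, Measurable (ξ i)) (μ h w : ℝ) :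
    MeasurableSet {ω | n ∈ exitTimes (deCusum (fun k => ξ k ω) μ h w)} :=
  .inter (measurableSet_lt (measurable_deCusum (fun i hi => hξ i hi.le) μ h w) measurable_const)
    (measurableSet_le measurable_const
      (measurable_deCusum (fun i hi => hξ i (Nat.le_of_lt_succ hi)) μ h w))

end Measurability

theorem lintegral_encard_setOf_mem {Ω ι : Type*} [Countable ι] [MeasurableSpace Ω] (P : Measure Ω)
    {E : ι → Set Ω} (hE : ∀ i, MeasurableSet (E i)) :
    ∫⁻ ω, ({i | ω ∈ E i}.encard : ℝ≥0∞) ∂P = ∑' i, P (E i) := by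
  have hcount (ω : Ω) : ({i | ω ∈ E i}.encard : ℝ≥0∞) = ∑' i, (E i).indicator 1 ω := by
    rw [← ENNReal.tsum_set_one, tsum_subtype {i | ω ∈ E i} fun _ => (1 : ℝ≥0∞)]
    rfl
  simp only [hcount]
  rw [lintegral_tsum fun i => (measurable_one.indicator (hE i)).aemeasurable]
  simp only [lintegral_indicator_one (hE _)]

section Renewal

variable {Ω 𝓧 : Type*} [MeasurableSpace Ω] [m𝓧 : MeasurableSpace 𝓧] {P : Measure Ω}
  {ξ : ℕ → Ω → 𝓧}

theorem indep_iSup_comap_Iic_comap_shift (hmeas : ∀ n, Measurable (ξ n)) (hindep : iIndepFun ξ P)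
    (n : ℕ) :
    Indep (⨆ i ∈ Iic n, m𝓧.comap (ξ i))
      (MeasurableSpace.comap (fun ω k => ξ (n + 1 + k) ω) inferInstance) P := by
  have hdisj : Disjoint (Iic n) (Ioi n) := Iic_disjoint_Ioi le_rfl
  refine indep_of_indep_of_le_right
    (indep_iSup_of_disjoint (fun i => (hmeas i).comap_le) hindep hdisj) ?_
  refine Measurable.comap_le (@measurable_pi_lambda _ _ _ (_) _ _ fun k => .of_comap_le ?_)
  exact le_iSup₂_of_le (n + 1 + k) (show n < n + 1 + k by lia) le_rfl

theorem identDistrib_shift (hindep : iIndepFun ξ P) (hid : ∀ n, IdentDistrib (ξ n) (ξ 0) P P)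
    (n : ℕ) : IdentDistrib (fun ω k => ξ (n + k) ω) (fun ω k => ξ k ω) P P :=
  .pi (fun _ => (hid _).trans (hid _).symm) (hindep.precomp (add_right_injective n)) hindep

theorem measure_inter_shift_mem (hmeas : ∀ n, Measurable (ξ n)) (hindep : iIndepFun ξ P)
    (hid : ∀ n, IdentDistrib (ξ n) (ξ 0) P P) {n : ℕ} {E : Set Ω}
    (hE : MeasurableSet[⨆ i ∈ Iic n, m𝓧.comap (ξ i)] E) {B : Set (ℕ → 𝓧)}
    (hB : MeasurableSet B) :
    P (E ∩ {ω | (fun k => ξ (n + 1 + k) ω) ∈ B}) = P E * P {ω | (fun k => ξ k ω) ∈ B} := by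
  calc P (E ∩ {ω | (fun k => ξ (n + 1 + k) ω) ∈ B})
      = P E * P {ω | (fun k => ξ (n + 1 + k) ω) ∈ B} :=
        (Indep_iff _ _ P).1 (indep_iSup_comap_Iic_comap_shift hmeas hindep n) E _ hE ⟨B, hB, rfl⟩
    _ = P E * P {ω | (fun k => ξ k ω) ∈ B} :=
        congrArg (P E * ·) ((identDistrib_shift hindep hid (n + 1)).measure_mem_eq hB)

theorem tsum_measure_le_inv_measure_of_subsingleton (hmeas : ∀ n, Measurable (ξ n))
    (hindep : iIndepFun ξ P) (hid : ∀ n, IdentDistrib (ξ n) (ξ 0) P P) {E : ℕ → Set Ω}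
    (hE : ∀ n, MeasurableSet[⨆ i ∈ Iic n, m𝓧.comap (ξ i)] (E n)) {B : Set (ℕ → 𝓧)}
    (hB : MeasurableSet B)
    (hlast : ∀ ω, {n | ω ∈ E n ∧ (fun k => ξ (n + 1 + k) ω) ∈ B}.Subsingleton) :
    ∑' n, P (E n) ≤ (P {ω | (fun k => ξ k ω) ∈ B})⁻¹ := by
  have := hindep.isProbabilityMeasure
  have hmeasE (n : ℕ) : MeasurableSet (E n) :=
    iSup₂_le (fun i _ => (hmeas i).comap_le) _ (hE n)
  have hmeasB (n : ℕ) : MeasurableSet {ω | (fun k => ξ (n + 1 + k) ω) ∈ B} :=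
    measurable_pi_lambda _ (fun k => hmeas (n + 1 + k)) hB
  rw [ENNReal.le_inv_iff_mul_le, ← ENNReal.tsum_mul_right]
  calc ∑' n, P (E n) * P {ω | (fun k => ξ k ω) ∈ B}
      = ∑' n, P (E n ∩ {ω | (fun k => ξ (n + 1 + k) ω) ∈ B}) := by
        simp only [measure_inter_shift_mem hmeas hindep hid (hE _) hB]
    _ = ∫⁻ ω, ({n | ω ∈ E n ∩ {ω | (fun k => ξ (n + 1 + k) ω) ∈ B}}.encard : ℝ≥0∞) ∂P :=
        (lintegral_encard_setOf_mem P fun n => (hmeasE n).inter (hmeasB n)).symm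
    _ ≤ ∫⁻ _, 1 ∂P := lintegral_mono fun ω =>
        (ENat.toENNReal_mono (encard_le_one_iff_subsingleton.2 (hlast ω))).trans
          ENat.toENNReal_one.le
    _ = 1 := by simp

end Renewal

section Random

variable {Ω : Type*} [MeasurableSpace Ω] {P : Measure Ω} {ξ : ℕ → Ω → ℝ} {μ h w : ℝ}

theorem lintegral_encard_exitTimes_deCusum_le (hmeas : ∀ n, Measurable (ξ n))
    (hindep : iIndepFun ξ P) (hid : ∀ n, IdentDistrib (ξ n) (ξ 0) P P) (μ h w : ℝ) :
    ∫⁻ ω, ((exitTimes (deCusum (fun k => ξ k ω) μ h w)).encard : ℝ≥0∞) ∂P ≤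
      (P {ω | (fun k => ξ k ω) ∈ nonnegWalks})⁻¹ := by
  have hξ (n i : ℕ) (hi : i ≤ n) :
      Measurable[⨆ i ∈ Iic n, MeasurableSpace.comap (ξ i) inferInstance] (ξ i) :=
    .of_comap_le (le_iSup₂_of_le i hi le_rfl)
  calc _ = ∑' n, P {ω | n ∈ exitTimes (deCusum (fun k => ξ k ω) μ h w)} :=
        lintegral_encard_setOf_mem P fun n =>
          measurableSet_mem_exitTimes_deCusum (fun i _ => hmeas i) μ h w
    _ ≤ _ := tsum_measure_le_inv_measure_of_subsingleton hmeas hindep hid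
        (fun n => @measurableSet_mem_exitTimes_deCusum _ (_) ξ n (hξ n) μ h w)
        measurableSet_nonnegWalks
        fun ω => subsingleton_exitTimes_followed_by_nonnegWalk (fun k => ξ k ω) μ h w

theorem deCusum_time_below_zero_bound_general (hmeas : ∀ n, Measurable (ξ n))
    (hindep : iIndepFun ξ P) (hid : ∀ n, IdentDistrib (ξ n) (ξ 0) P P) (hμ : 0 < μ)
    (hw : -h ≤ w) :
    ∫⁻ ω, ({n | deCusum (fun k => ξ k ω) μ h w n < 0}.encard : ℝ≥0∞) ∂P ≤
      (⌈h / μ⌉₊ : ℝ≥0∞) / P {ω | ∀ n : ℕ, 1 ≤ n → 0 ≤ psum (fun k => ξ k ω) n} := by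
  calc ∫⁻ ω, ({n | deCusum (fun k => ξ k ω) μ h w n < 0}.encard : ℝ≥0∞) ∂P
      ≤ ∫⁻ ω, ⌈h / μ⌉₊ * ((exitTimes (deCusum (fun k => ξ k ω) μ h w)).encard : ℝ≥0∞) ∂P :=
        lintegral_mono fun ω => by
          simpa only [ENat.toENNReal_mul, ENat.toENNReal_coe] using
            ENat.toENNReal_mono (encard_deCusum_neg_le (ξ := fun k => ξ k ω) hμ hw)
    _ = ⌈h / μ⌉₊ * ∫⁻ ω, ((exitTimes (deCusum (fun k => ξ k ω) μ h w)).encard : ℝ≥0∞) ∂P :=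
        lintegral_const_mul' _ _ (ENNReal.natCast_ne_top _)
    _ ≤ ⌈h / μ⌉₊ * (P {ω | (fun k => ξ k ω) ∈ nonnegWalks})⁻¹ := by
        gcongr
        exact lintegral_encard_exitTimes_deCusum_le hmeas hindep hid μ h w

end Random

/-- For i.i.d. integrable increments with positive mean, the expected total time the DE-CuSum
statistic (started at `w ∈ [-h,∞)`) spends below `0` before first exceeding the threshold
`A ≥ 0` is at most `⌈h/μ⌉ / q`, where `q = ℙ(S_n ≥ 0 for all n ≥ 1)`; the bound does not
depend on `w` or `A`. -/
theorem deCusum_time_below_zero_bound {Ω : Type*} [MeasurableSpace Ω] (P : Measure Ω)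
    [IsProbabilityMeasure P] (ξ : ℕ → Ω → ℝ) (hmeas : ∀ n, Measurable (ξ n))
    (hindep : iIndepFun ξ P)
    (hid : ∀ n, IdentDistrib (ξ n) (ξ 0) P P)
    (hint : Integrable (ξ 0) P) (hmean : 0 < ∫ ω, ξ 0 ω ∂P)
    (μ h w A : ℝ) (hμ : 0 < μ) (hh : 0 ≤ h) (hw : -h ≤ w) (hA : 0 ≤ A) :
    ∫⁻ ω, (Set.encard {n : ℕ |
        (n : ℕ∞) < firstTime (fun m => A < deCusum (fun k => ξ k ω) μ h w m) ∧
        deCusum (fun k => ξ k ω) μ h w n < 0} : ℝ≥0∞) ∂P ≤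
      (⌈h / μ⌉₊ : ℝ≥0∞) / P {ω | ∀ n : ℕ, 1 ≤ n → 0 ≤ psum (fun k => ξ k ω) n} := by
  exact (lintegral_mono fun ω => ENat.toENNReal_mono (encard_le_encard fun n hn => hn.2)).trans
    (deCusum_time_below_zero_bound_general hmeas hindep hid hμ hw)
end

section
/- Let (ξ_n)_{n≥1} be i.i.d. real random variables with E[ξ_1] > 0 and E[ξ_1²] < ∞, and let S_n = ∑_{k=1}^n ξ_k. Then the last exit time ν_R = sup{n ≥ 1 : S_n ≤ 0} (with sup ∅ = 0) is finite almost surely and has finite expectation: E[ν_R] < ∞. -/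
open MeasureTheory Filter Set ProbabilityTheory
open scoped ENNReal

/-- Last time `n ≥ 1` at which `P n` holds, valued in `ℕ∞` with `sup ∅ = 0`. -/
noncomputable def lastTime (P : ℕ → Prop) : ℕ∞ :=
  sSup ((↑) '' {n : ℕ | 1 ≤ n ∧ P n})

/-!
Put `m = E ξ₁` and `Yₖ = m / 2 - ξₖ`. If `S_n ≤ 0` then the walk with steps `Y` is at height at
least `m n / 2` at time `n`, so `ν_R` is at most `2 / m` times the all-time maximum of that walk.
It remains to bound the expected maximum of a walk with negative drift and square-integrable steps
(Kingman's bound). Splitting off the first step, the running maxima satisfy Lindley's recursion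
`M_{n+1} = max 0 (Y₁ + M'_n)`, where `M'_n` is independent of `Y₁` and distributed as `M_n`. Hence
`E M_n² ≤ E M_{n+1}² ≤ E (Y₁ + M'_n)² = E Y₁² + 2 E Y₁ E M_n + E M_n²`,
that is, `E M_n ≤ E Y₁² / (2 |E Y₁|)` uniformly in `n`.
-/

lemma lastTime_le_iff {p : ℕ → Prop} {c : ℝ≥0∞} :
    (lastTime p : ℝ≥0∞) ≤ c ↔ ∀ n, 1 ≤ n → p n → (n : ℝ≥0∞) ≤ c := by
  rw [← ENat.le_floor, lastTime, sSup_le_iff, forall_mem_image]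
  simp only [mem_ofPred_eq, and_imp, ENat.le_floor, ENat.toENNReal_coe]

lemma psum_succ' (x : ℕ → ℝ) (n : ℕ) : psum x (n + 1) = x 0 + psum (fun k => x (k + 1)) n := by
  simp only [psum, Finset.sum_range_succ', add_comm]

lemma psum_const_sub (a : ℝ) (x : ℕ → ℝ) (n : ℕ) :
    psum (fun k => a - x k) n = n * a - psum x n := by
  simp [psum]

/-- The running maximum `max_{0 ≤ k ≤ n} S_k` of the walk with steps `x`; it is nonnegative since
`S_0 = 0` takes part in it. -/
noncomputable def walkMax (x : ℕ → ℝ) (n : ℕ) : ℝ := partialSups (psum x) n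

lemma monotone_walkMax (x : ℕ → ℝ) : Monotone (walkMax x) :=
  partialSups_monotone _

lemma psum_le_walkMax (x : ℕ → ℝ) (n : ℕ) : psum x n ≤ walkMax x n :=
  le_partialSups _ n

lemma walkMax_zero (x : ℕ → ℝ) : walkMax x 0 = 0 := by
  simp [walkMax, psum]

lemma walkMax_nonneg (x : ℕ → ℝ) (n : ℕ) : 0 ≤ walkMax x n :=
  walkMax_zero x ▸ monotone_walkMax x n.zero_le

lemma walkMax_succ (x : ℕ → ℝ) (n : ℕ) :
    walkMax x (n + 1) = max 0 (x 0 + walkMax (fun k => x (k + 1)) n) := by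
  have hshift : psum x ∘ (· + 1) = fun k => x 0 + psum (fun k => x (k + 1)) k :=
    funext (psum_succ' x)
  simp only [walkMax, partialSups_add_one', hshift, partialSups_const_add]
  simp [psum]

lemma walkMax_succ_sq_le (x : ℕ → ℝ) (n : ℕ) :
    walkMax x (n + 1) ^ 2 ≤ (x 0 + walkMax (fun k => x (k + 1)) n) ^ 2 := by
  rw [sq_le_sq, walkMax_succ, abs_of_nonneg (le_max_left _ _)]
  exact max_le (abs_nonneg _) (le_abs_self _)

lemma measurable_walkMax (n : ℕ) : Measurable fun x : ℕ → ℝ => walkMax x n := by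
  induction n with
  | zero => simp only [walkMax_zero, measurable_const]
  | succ n ih =>
    simp only [walkMax_succ]
    have hshift : Measurable fun (x : ℕ → ℝ) k => x (k + 1) := by fun_prop
    exact measurable_const.max ((measurable_pi_apply 0).add (ih.comp hshift))

lemma lastTime_psum_nonpos_le {a : ℝ} (ha : 0 < a) (x : ℕ → ℝ) :
    (lastTime (fun n => psum x n ≤ 0) : ℝ≥0∞) ≤
      (⨆ n, ENNReal.ofReal (walkMax (fun k => a - x k) n)) / ENNReal.ofReal a := by
  refine lastTime_le_iff.2 fun n _ hn => ?_
  rw [ENNReal.le_div_iff_mul_le (by simp [ha]) (by simp)]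
  have hna : n * a ≤ walkMax (fun k => a - x k) n := by
    linarith [psum_const_sub a x n, psum_le_walkMax (fun k => a - x k) n]
  calc (n : ℝ≥0∞) * ENNReal.ofReal a = ENNReal.ofReal (n * a) := by
        rw [ENNReal.ofReal_mul n.cast_nonneg, ENNReal.ofReal_natCast]
    _ ≤ ENNReal.ofReal (walkMax (fun k => a - x k) n) := ENNReal.ofReal_le_ofReal hna
    _ ≤ _ := le_iSup (fun n => ENNReal.ofReal (walkMax (fun k => a - x k) n)) n

section IIDSequence

variable {Ω E : Type*} [MeasurableSpace Ω] [MeasurableSpace E] {P : Measure Ω} {X : ℕ → Ω → E}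

lemma indepFun_head_tail (hX : ∀ n, AEMeasurable (X n) P) (hindep : iIndepFun X P) :
    IndepFun (X 0) (fun ω n => X (n + 1) ω) P := by
  have := hindep.isProbabilityMeasure
  refine IndepFun.indepFun_process₀ (hX 0) (fun n => hX (n + 1)) fun I => ?_
  have hdisj : Disjoint {0} (I.map (addRightEmbedding 1)) := by simp
  exact (hindep.indepFun_finset₀ _ _ hdisj hX).comp
    (φ := fun x : ({0} : Finset ℕ) → E => x ⟨0, by simp⟩)
    (ψ := fun (x : I.map (addRightEmbedding 1) → E) (i : I) => x ⟨i + 1, by simp⟩)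
    (by fun_prop) (by fun_prop)

lemma identDistrib_tail (hindep : iIndepFun X P) (hid : ∀ n, IdentDistrib (X n) (X 0) P P) :
    IdentDistrib (fun ω n => X (n + 1) ω) (fun ω n => X n ω) P P :=
  IdentDistrib.pi (fun n => (hid (n + 1)).trans (hid n).symm)
    (hindep.precomp (add_left_injective 1)) hindep

end IIDSequence

lemma integral_add_sq_of_indepFun {Ω : Type*} [MeasurableSpace Ω] {P : Measure Ω} {X Z : Ω → ℝ}
    (hX : MemLp X 2 P) (hZ : MemLp Z 2 P) (hXZ : IndepFun X Z P) :
    ∫ ω, (X ω + Z ω) ^ 2 ∂P =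
      ∫ ω, X ω ^ 2 ∂P + 2 * ((∫ ω, X ω ∂P) * ∫ ω, Z ω ∂P) + ∫ ω, Z ω ^ 2 ∂P := by
  have hprod : Integrable (fun ω => 2 * (X ω * Z ω)) P := (hX.integrable_mul hZ).const_mul 2
  have hsum : Integrable (fun ω => X ω ^ 2 + 2 * (X ω * Z ω)) P := hX.integrable_sq.add hprod
  simp only [add_sq, mul_assoc]
  rw [integral_add hsum hZ.integrable_sq, integral_add hX.integrable_sq hprod,
    integral_const_mul, hXZ.integral_fun_mul_eq_mul_integral hX.1 hZ.1]

section RandomWalk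

variable {Ω : Type*} [MeasurableSpace Ω] {P : Measure Ω} {Y : ℕ → Ω → ℝ}

lemma aemeasurable_walkMax (hY : ∀ n, AEMeasurable (Y n) P) (n : ℕ) :
    AEMeasurable (fun ω => walkMax (fun k => Y k ω) n) P :=
  (measurable_walkMax n).comp_aemeasurable (aemeasurable_pi_lambda _ hY)

lemma memLp_walkMax {p : ℝ≥0∞} (hY : ∀ n, MemLp (Y n) p P) (n : ℕ) :
    MemLp (fun ω => walkMax (fun k => Y k ω) n) p P := by
  induction n generalizing Y with
  | zero => simp only [walkMax_zero, MemLp.zero']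
  | succ n ih =>
    simp only [walkMax_succ]
    exact (MemLp.zero' (ε := ℝ)).sup ((hY 0).add (ih fun k => hY (k + 1)))

lemma integral_walkMax_le (hindep : iIndepFun Y P) (hid : ∀ n, IdentDistrib (Y n) (Y 0) P P)
    (hL2 : MemLp (Y 0) 2 P) (hneg : ∫ ω, Y 0 ω ∂P < 0) (n : ℕ) :
    ∫ ω, walkMax (fun k => Y k ω) n ∂P ≤ (∫ ω, Y 0 ω ^ 2 ∂P) / (2 * -∫ ω, Y 0 ω ∂P) := by
  have := hindep.isProbabilityMeasure
  have hY : ∀ k, MemLp (Y k) 2 P := fun k => (hid k).memLp_iff.2 hL2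
  set M : ℕ → Ω → ℝ := fun n ω => walkMax (fun k => Y k ω) n
  set M' : Ω → ℝ := fun ω => walkMax (fun k => Y (k + 1) ω) n
  have hM : ∀ n, MemLp (M n) 2 P := memLp_walkMax hY
  have hM' : MemLp M' 2 P := memLp_walkMax (fun k => hY (k + 1)) n
  have hlaw : IdentDistrib M' (M n) P P :=
    (identDistrib_tail hindep hid).comp (measurable_walkMax n)
  have hYM' : IndepFun (Y 0) M' P :=
    (indepFun_head_tail (fun k => (hid k).aemeasurable_fst) hindep).comp measurable_id
      (measurable_walkMax n)
  have hmono : ∫ ω, M n ω ^ 2 ∂P ≤ ∫ ω, M (n + 1) ω ^ 2 ∂P :=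
    integral_mono (hM n).integrable_sq (hM (n + 1)).integrable_sq fun ω =>
      pow_le_pow_left₀ (walkMax_nonneg _ n) (monotone_walkMax _ n.le_succ) 2
  have hlindley : ∫ ω, M (n + 1) ω ^ 2 ∂P ≤ ∫ ω, (Y 0 ω + M' ω) ^ 2 ∂P :=
    integral_mono (hM (n + 1)).integrable_sq ((hY 0).add hM').integrable_sq fun ω =>
      walkMax_succ_sq_le _ n
  have hsecond : ∫ ω, (Y 0 ω + M' ω) ^ 2 ∂P =
      ∫ ω, Y 0 ω ^ 2 ∂P + 2 * ((∫ ω, Y 0 ω ∂P) * ∫ ω, M n ω ∂P) + ∫ ω, M n ω ^ 2 ∂P := by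
    rw [integral_add_sq_of_indepFun (hY 0) hM' hYM', hlaw.integral_eq, hlaw.sq.integral_eq]
  rw [le_div_iff₀ (by linarith)]
  linarith

lemma lintegral_iSup_walkMax_le (hindep : iIndepFun Y P)
    (hid : ∀ n, IdentDistrib (Y n) (Y 0) P P) (hL2 : MemLp (Y 0) 2 P)
    (hneg : ∫ ω, Y 0 ω ∂P < 0) :
    ∫⁻ ω, ⨆ n, ENNReal.ofReal (walkMax (fun k => Y k ω) n) ∂P ≤
      ENNReal.ofReal ((∫ ω, Y 0 ω ^ 2 ∂P) / (2 * -∫ ω, Y 0 ω ∂P)) := by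
  have := hindep.isProbabilityMeasure
  have hY : ∀ k, MemLp (Y k) 2 P := fun k => (hid k).memLp_iff.2 hL2
  rw [lintegral_iSup'
    (fun n => (aemeasurable_walkMax (fun k => (hid k).aemeasurable_fst) n).ennreal_ofReal)
    (ae_of_all _ fun ω _ _ h => ENNReal.ofReal_le_ofReal (monotone_walkMax _ h))]
  refine iSup_le fun n => ?_
  rw [← ofReal_integral_eq_lintegral_ofReal ((memLp_walkMax hY n).integrable one_le_two)
    (ae_of_all _ fun ω => walkMax_nonneg _ n)]
  exact ENNReal.ofReal_le_ofReal (integral_walkMax_le hindep hid hL2 hneg n)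

lemma lintegral_iSup_walkMax_const_sub_lt_top (hindep : iIndepFun Y P)
    (hid : ∀ n, IdentDistrib (Y n) (Y 0) P P) (hL2 : MemLp (Y 0) 2 P) {a : ℝ}
    (ha : a < ∫ ω, Y 0 ω ∂P) :
    ∫⁻ ω, ⨆ n, ENNReal.ofReal (walkMax (fun k => a - Y k ω) n) ∂P < ⊤ := by
  have := hindep.isProbabilityMeasure
  have hsub : Measurable fun x : ℝ => a - x := by fun_prop
  have hneg : ∫ ω, (a - Y 0 ω) ∂P < 0 := by
    rw [integral_sub (integrable_const _) (hL2.integrable one_le_two), integral_const,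
      probReal_univ, one_smul]
    linarith
  exact (lintegral_iSup_walkMax_le (hindep.comp (fun _ x => a - x) fun _ => hsub)
    (fun n => (hid n).comp hsub) ((memLp_const a).sub hL2) hneg).trans_lt ENNReal.ofReal_lt_top

end RandomWalk

/-- For i.i.d. increments with positive mean and finite second moment, the last exit time
`ν_R = sup{n ≥ 1 : S_n ≤ 0}` of the random walk is finite almost surely and has finite
expectation. -/
theorem walk_lastExit_integrable {Ω : Type*} [MeasurableSpace Ω] (P : Measure Ω)
    [IsProbabilityMeasure P] (ξ : ℕ → Ω → ℝ) (hmeas : ∀ n, Measurable (ξ n))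
    (hindep : iIndepFun ξ P)
    (hid : ∀ n, IdentDistrib (ξ n) (ξ 0) P P)
    (hint : Integrable (ξ 0) P) (hmean : 0 < ∫ ω, ξ 0 ω ∂P)
    (hvar : Integrable (fun ω => (ξ 0 ω) ^ 2) P) :
    (∀ᵐ ω ∂P, lastTime (fun n => psum (fun k => ξ k ω) n ≤ 0) < ⊤) ∧
      ∫⁻ ω, (lastTime (fun n => psum (fun k => ξ k ω) n ≤ 0) : ℝ≥0∞) ∂P < ⊤ := by
  set m := ∫ ω, ξ 0 ω ∂P
  set W : Ω → ℝ≥0∞ := fun ω => ⨆ n, ENNReal.ofReal (walkMax (fun k => m / 2 - ξ k ω) n)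
  have hle : ∀ ω, (lastTime (fun n => psum (fun k => ξ k ω) n ≤ 0) : ℝ≥0∞) ≤
      W ω / ENNReal.ofReal (m / 2) := fun ω => lastTime_psum_nonpos_le (half_pos hmean) _
  have hWmeas : AEMeasurable W P := AEMeasurable.iSup fun n =>
    (aemeasurable_walkMax (fun k => ((hmeas k).const_sub _).aemeasurable) n).ennreal_ofReal
  have hW : ∫⁻ ω, W ω ∂P < ⊤ :=
    lintegral_iSup_walkMax_const_sub_lt_top hindep hid
      ((memLp_two_iff_integrable_sq hint.1).2 hvar) (half_lt_self hmean)
  have hWdiv : ∫⁻ ω, W ω / ENNReal.ofReal (m / 2) ∂P < ⊤ := by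
    simp only [div_eq_mul_inv]
    rw [lintegral_mul_const'' _ hWmeas]
    exact ENNReal.mul_lt_top hW (by simpa using hmean)
  refine ⟨?_, (lintegral_mono hle).trans_lt hWdiv⟩
  filter_upwards [ae_lt_top' (hWmeas.div_const _) hWdiv.ne] with ω hω
  exact ENat.toENNReal_lt_top.1 ((hle ω).trans_lt hω)
end

section
/- Let (ξ_n)_{n≥1} be i.i.d. integrable real random variables with E[ξ_1] = −d for some d > 0, and let μ > 0. Let (W_n)_{n≥0} be the DE-CuSum sequence with h = ∞ started at 0, i.e., W_0 = 0 and W_{n+1} = W_n + ξ_{n+1} if W_n ≥ 0, W_{n+1} = min(W_n + μ, 0) if W_n < 0. Then the pre-change duty cycle satisfies limsup_{γ→∞} (1/γ) E[#{1 ≤ k ≤ γ−1 : W_{k−1} ≥ 0}] ≤ μ/(μ + d). -/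
open MeasureTheory Filter Set ProbabilityTheory
open scoped ENNReal

/-- DE-CuSum sequence with `h = ∞` and parameter `μ > 0`, started at `0`:
`W_{n+1} = min (W_n + μ) 0` if `W_n < 0`, and `W_{n+1} = W_n + ξ_{n+1}` if `W_n ≥ 0`. -/
noncomputable def deCusumInf (ξ : ℕ → ℝ) (μ : ℝ) : ℕ → ℝ
  | 0 => 0
  | n + 1 =>
    if deCusumInf ξ μ n < 0 then min (deCusumInf ξ μ n + μ) 0
    else deCusumInf ξ μ n + ξ n

/-!
At or above zero the statistic has drift at most `-d`, below zero it climbs by at most `μ` per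
step, so `E[W_n] ≤ n * μ - (μ + d) * E[N_n]`, where `N_n` counts the samples before time `n`.
Conversely a single increment is responsible for the whole depth of an excursion below zero, so
`W_n` is at least minus the largest `|ξ_k|` with `k < n`, hence at least
`-C - ∑ k < n, (|ξ_k| - C)⁺` for every `C ≥ 0`; by uniform integrability a suitable `C` makes the
expectation of this at least `-C - n * ε`. Comparing the two bounds and dividing by `n` gives the
claim.
-/

lemma deCusumInf_succ_le (x : ℕ → ℝ) (μ : ℝ) (n : ℕ) :
    deCusumInf x μ (n + 1) ≤
      deCusumInf x μ n + if 0 ≤ deCusumInf x μ n then x n else μ := by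
  rcases lt_or_ge (deCusumInf x μ n) 0 with hneg | hpos
  · simpa only [deCusumInf, if_pos hneg, if_neg hneg.not_ge] using min_le_left _ _
  · simp only [deCusumInf, if_neg hpos.not_gt, if_pos hpos, le_refl]

lemma le_deCusumInf_of_antitone {x b : ℕ → ℝ} {μ : ℝ} (hμ : 0 ≤ μ) (hb : Antitone b)
    (hb₀ : b 0 ≤ 0) (hbx : ∀ n, b (n + 1) ≤ x n) (n : ℕ) : b n ≤ deCusumInf x μ n := by
  induction n with
  | zero => exact hb₀
  | succ n ih =>
    rw [deCusumInf]
    split_ifs with hneg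
    · have hle : b (n + 1) ≤ deCusumInf x μ n := (hb n.le_succ).trans ih
      exact le_min (by linarith) (by linarith)
    · linarith [hbx n]

lemma neg_sub_sum_posPart_le_deCusumInf {μ C : ℝ} (hμ : 0 ≤ μ) (hC : 0 ≤ C) (x : ℕ → ℝ)
    (n : ℕ) :
    -C - ∑ k ∈ Finset.range n, (|x k| - C)⁺ ≤ deCusumInf x μ n := by
  have hmono : Monotone fun n => ∑ k ∈ Finset.range n, (|x k| - C)⁺ :=
    monotone_nat_of_le_succ fun n => by
      simpa only [Finset.sum_range_succ, le_add_iff_nonneg_right] using posPart_nonneg (|x n| - C)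
  refine le_deCusumInf_of_antitone (b := fun n => -C - ∑ k ∈ Finset.range n, (|x k| - C)⁺)
    hμ (fun m n hmn => sub_le_sub_left (hmono hmn) _) (by simpa using hC) (fun n => ?_) n
  have hsum : 0 ≤ ∑ k ∈ Finset.range n, (|x k| - C)⁺ :=
    Finset.sum_nonneg fun k _ => posPart_nonneg (|x k| - C)
  simp only [Finset.sum_range_succ]
  linarith [le_posPart (|x n| - C), neg_abs_le (x n)]

lemma limsup_ofReal_div_natCast_le {u : ℕ → ℝ} {a : ℝ}
    (hu : ∀ ε > 0, ∃ C, ∀ n : ℕ, u n ≤ C + n * (a + ε)) :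
    limsup (fun n : ℕ => ENNReal.ofReal (u n) / n) atTop ≤ ENNReal.ofReal a := by
  have hright : Tendsto (fun ε => ENNReal.ofReal (a + ε)) (nhdsWithin 0 (Ioi 0))
      (nhds (ENNReal.ofReal a)) := by
    have hcont : Continuous fun ε => ENNReal.ofReal (a + ε) :=
      ENNReal.continuous_ofReal.comp (by fun_prop)
    simpa using (hcont.tendsto 0).mono_left nhdsWithin_le_nhds
  refine ge_of_tendsto hright (eventually_nhdsWithin_of_forall fun ε hε => ?_)
  obtain ⟨C, hC⟩ := hu ε hε
  have hlim : Tendsto (fun n : ℕ => ENNReal.ofReal (C / n + (a + ε))) atTop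
      (nhds (ENNReal.ofReal (a + ε))) :=
    ENNReal.tendsto_ofReal <| by
      simpa using (tendsto_const_div_atTop_nhds_zero_nat C).add_const (a + ε)
  rw [← hlim.limsup_eq]
  refine limsup_le_limsup ?_
  filter_upwards [eventually_gt_atTop 0] with n hn
  have hn' : (0 : ℝ) < n := Nat.cast_pos.2 hn
  rw [← ENNReal.ofReal_natCast, ← ENNReal.ofReal_div_of_pos hn']
  refine ENNReal.ofReal_le_ofReal ?_
  calc u n / n ≤ (C + n * (a + ε)) / n := by gcongr; exact hC n
    _ = C / n + (a + ε) := by field_simp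

section Expectations

variable {Ω : Type*} {mΩ : MeasurableSpace Ω} {P : Measure Ω}

lemma lintegral_encard_lt_and_mem {A : ℕ → Set Ω} (hA : ∀ j, MeasurableSet (A j)) (n : ℕ) :
    ∫⁻ ω, ({j : ℕ | j < n ∧ ω ∈ A j}.encard : ℝ≥0∞) ∂P = ∑ j ∈ Finset.range n, P (A j) := by
  classical
  have hcount (ω : Ω) : ({j : ℕ | j < n ∧ ω ∈ A j}.encard : ℝ≥0∞) =
      ∑ j ∈ Finset.range n, (A j).indicator 1 ω := by
    have hset : {j : ℕ | j < n ∧ ω ∈ A j} = ((Finset.range n).filter (ω ∈ A ·) : Finset ℕ) := by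
      ext j
      simp
    rw [hset, encard_coe_eq_coe_finsetCard]
    simp only [indicator_apply, Pi.one_apply, Finset.sum_boole, ENat.toENNReal_coe]
  simp_rw [hcount]
  rw [lintegral_finsetSum _ fun j _ => measurable_one.indicator (hA j)]
  simp only [lintegral_indicator_one (hA _)]

lemma setIntegral_le_of_condExp_le {m : MeasurableSpace Ω} (hm : m ≤ mΩ) [IsFiniteMeasure P]
    {f : Ω → ℝ} {c : ℝ} {s : Set Ω} (hf : Integrable f P) (hfc : P[f | m] ≤ᵐ[P] fun _ => c)
    (hs : MeasurableSet[m] s) : ∫ ω in s, f ω ∂P ≤ P.real s * c :=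
  calc ∫ ω in s, f ω ∂P = ∫ ω in s, (P[f | m]) ω ∂P := (setIntegral_condExp hm hf hs).symm
    _ ≤ ∫ _ in s, c ∂P :=
      setIntegral_mono_ae integrable_condExp.integrableOn integrableOn_const hfc
    _ = P.real s * c := by rw [setIntegral_const, smul_eq_mul]

lemma exists_integral_posPart_abs_sub_le {ι : Type*} {X : ι → Ω → ℝ}
    (hX : UniformIntegrable X 1 P) {ε : ℝ} (hε : 0 < ε) :
    ∃ C : ℝ, 0 ≤ C ∧ ∀ i, ∫ ω, (|X i ω| - C)⁺ ∂P ≤ ε := by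
  obtain ⟨C, hC⟩ := hX.spec one_ne_zero ENNReal.one_ne_top hε
  refine ⟨C, C.2, fun i => ?_⟩
  have hmeas : AEStronglyMeasurable (fun ω => (|X i ω| - C)⁺) P :=
    ((hX.1 i).norm.sub aestronglyMeasurable_const).sup aestronglyMeasurable_const
  have hle (ω : Ω) : ‖(|X i ω| - C)⁺‖ ≤ ‖{ω | C ≤ ‖X i ω‖₊}.indicator (X i) ω‖ := by
    rw [Real.norm_of_nonneg (posPart_nonneg _)]
    by_cases hω : C ≤ ‖X i ω‖₊
    · rw [indicator_of_mem (by exact hω), Real.norm_eq_abs]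
      exact sup_le (sub_le_self _ C.2) (abs_nonneg _)
    · have habs : |X i ω| ≤ C := (not_le.1 hω).le
      rw [posPart_of_nonpos (sub_nonpos.2 habs)]
      exact norm_nonneg _
  calc ∫ ω, (|X i ω| - C)⁺ ∂P
      = (eLpNorm (fun ω => (|X i ω| - C)⁺) 1 P).toReal := by
        rw [eLpNorm_one_eq_lintegral_enorm, ← integral_norm_eq_lintegral_enorm hmeas]
        simp only [Real.norm_of_nonneg (posPart_nonneg _)]
    _ ≤ ε := ENNReal.toReal_le_of_le_ofReal hε.le ((eLpNorm_mono hle).trans (hC i))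

end Expectations

/-- The event that the sample at time `n + 1` is taken when the DE-CuSum statistic is driven by
the process `ξ`. -/
def samplingEvent {Ω : Type*} (ξ : ℕ → Ω → ℝ) (μ : ℝ) (n : ℕ) : Set Ω :=
  {ω | 0 ≤ deCusumInf (fun k => ξ k ω) μ n}

section Drift

variable {Ω : Type*} {mΩ : MeasurableSpace Ω} {P : Measure Ω} {𝓕 : Filtration ℕ mΩ}
  {ξ : ℕ → Ω → ℝ} {d μ : ℝ}

lemma measurable_deCusumInf (hadapt : ∀ n, Measurable[𝓕 (n + 1)] (ξ n)) (μ : ℝ) (n : ℕ) :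
    Measurable[𝓕 n] fun ω => deCusumInf (fun k => ξ k ω) μ n := by
  induction n with
  | zero => exact measurable_const
  | succ n ih =>
    have ih' := ih.mono (𝓕.mono n.le_succ) le_rfl
    exact .ite (measurableSet_lt ih' measurable_const)
      ((ih'.add_const μ).min measurable_const) (ih'.add (hadapt n))

lemma measurableSet_samplingEvent (hadapt : ∀ n, Measurable[𝓕 (n + 1)] (ξ n)) (μ : ℝ) (n : ℕ) :
    MeasurableSet[𝓕 n] (samplingEvent ξ μ n) :=
  measurableSet_le measurable_const (measurable_deCusumInf hadapt μ n)

lemma integrable_deCusumInf [IsFiniteMeasure P] (hadapt : ∀ n, Measurable[𝓕 (n + 1)] (ξ n))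
    (hint : ∀ n, Integrable (ξ n) P) (μ : ℝ) (n : ℕ) :
    Integrable (fun ω => deCusumInf (fun k => ξ k ω) μ n) P := by
  classical
  induction n with
  | zero => exact integrable_const 0
  | succ n ih =>
    have hlt : MeasurableSet {ω | deCusumInf (fun k => ξ k ω) μ n < 0} :=
      𝓕.le n _ (measurableSet_lt (measurable_deCusumInf hadapt μ n) measurable_const)
    exact Integrable.piecewise hlt
      ((ih.add (integrable_const μ)).inf (integrable_const 0)).integrableOn
      (ih.add (hint n)).integrableOn

lemma integral_deCusumInf_le [IsProbabilityMeasure P]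
    (hadapt : ∀ n, Measurable[𝓕 (n + 1)] (ξ n)) (hint : ∀ n, Integrable (ξ n) P)
    (hdrift : ∀ n, P[ξ n | 𝓕 n] ≤ᵐ[P] fun _ => -d) (μ : ℝ) (n : ℕ) :
    ∫ ω, deCusumInf (fun k => ξ k ω) μ n ∂P ≤
      n * μ - (μ + d) * ∑ j ∈ Finset.range n, P.real (samplingEvent ξ μ j) := by
  classical
  induction n with
  | zero => simp [deCusumInf]
  | succ n ih =>
    set W : ℕ → Ω → ℝ := fun j ω => deCusumInf (fun k => ξ k ω) μ j
    set A := samplingEvent ξ μ n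
    have hA : MeasurableSet[𝓕 n] A := measurableSet_samplingEvent hadapt μ n
    have hA' : MeasurableSet A := 𝓕.le n _ hA
    have hW (j : ℕ) : Integrable (W j) P := integrable_deCusumInf hadapt hint μ j
    have hstep : Integrable (A.piecewise (ξ n) fun _ => μ) P :=
      Integrable.piecewise hA' (hint n).integrableOn (integrable_const μ).integrableOn
    have hsample : ∫ ω in A, ξ n ω ∂P ≤ P.real A * -d :=
      setIntegral_le_of_condExp_le (𝓕.le n) (hint n) (hdrift n) hA
    calc ∫ ω, W (n + 1) ω ∂P
        ≤ ∫ ω, (W n ω + A.piecewise (ξ n) (fun _ => μ) ω) ∂P :=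
          integral_mono (hW _) ((hW n).add hstep) fun ω => deCusumInf_succ_le (ξ · ω) μ n
      _ = ∫ ω, W n ω ∂P + (∫ ω in A, ξ n ω ∂P + (1 - P.real A) * μ) := by
          rw [integral_add (hW n) hstep, integral_piecewise hA' (hint n).integrableOn
            (integrable_const μ).integrableOn, setIntegral_const, probReal_compl_eq_one_sub hA',
            smul_eq_mul]
      _ ≤ (n * μ - (μ + d) * ∑ j ∈ Finset.range n, P.real (samplingEvent ξ μ j)) +
            (P.real A * -d + (1 - P.real A) * μ) := by gcongr
      _ = (n + 1 : ℕ) * μ -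
            (μ + d) * ∑ j ∈ Finset.range (n + 1), P.real (samplingEvent ξ μ j) := by
          rw [Finset.sum_range_succ]
          push_cast
          ring

lemma exists_neg_le_integral_deCusumInf [IsProbabilityMeasure P]
    (hadapt : ∀ n, Measurable[𝓕 (n + 1)] (ξ n)) (hui : UniformIntegrable ξ 1 P) (hμ : 0 ≤ μ)
    {ε : ℝ} (hε : 0 < ε) :
    ∃ C : ℝ, ∀ n : ℕ, -(C + n * ε) ≤ ∫ ω, deCusumInf (fun k => ξ k ω) μ n ∂P := by
  have hint (n : ℕ) : Integrable (ξ n) P := memLp_one_iff_integrable.1 (hui.memLp n)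
  obtain ⟨C, hC, htail⟩ := exists_integral_posPart_abs_sub_le hui hε
  have htail_int (k : ℕ) : Integrable (fun ω => (|ξ k ω| - C)⁺) P :=
    ((hint k).abs.sub (integrable_const C)).pos_part
  refine ⟨C, fun n => ?_⟩
  calc -(C + n * ε)
      = -C - ∑ _k ∈ Finset.range n, ε := by
        rw [Finset.sum_const, Finset.card_range, nsmul_eq_mul]
        ring
    _ ≤ -C - ∑ k ∈ Finset.range n, ∫ ω, (|ξ k ω| - C)⁺ ∂P := by
        gcongr with k
        exact htail k
    _ = ∫ ω, (-C - ∑ k ∈ Finset.range n, (|ξ k ω| - C)⁺) ∂P := by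
        rw [integral_sub (integrable_const _) (integrable_finsetSum _ fun k _ => htail_int k),
          integral_finsetSum _ fun k _ => htail_int k, integral_const, probReal_univ, one_smul]
    _ ≤ ∫ ω, deCusumInf (fun k => ξ k ω) μ n ∂P :=
        integral_mono ((integrable_const _).sub (integrable_finsetSum _ fun k _ => htail_int k))
          (integrable_deCusumInf hadapt hint μ n) fun ω =>
            neg_sub_sum_posPart_le_deCusumInf hμ hC (ξ · ω) n

lemma exists_sum_measureReal_samplingEvent_le [IsProbabilityMeasure P]
    (hadapt : ∀ n, Measurable[𝓕 (n + 1)] (ξ n)) (hui : UniformIntegrable ξ 1 P) (hμ : 0 ≤ μ)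
    (hμd : 0 < μ + d) (hdrift : ∀ n, P[ξ n | 𝓕 n] ≤ᵐ[P] fun _ => -d) {ε : ℝ} (hε : 0 < ε) :
    ∃ C : ℝ, ∀ n : ℕ,
      ∑ j ∈ Finset.range n, P.real (samplingEvent ξ μ j) ≤ C + n * (μ / (μ + d) + ε) := by
  obtain ⟨C, hC⟩ := exists_neg_le_integral_deCusumInf hadapt hui hμ (mul_pos hμd hε)
  refine ⟨C / (μ + d), fun n => ?_⟩
  have hupper := integral_deCusumInf_le hadapt
    (fun n => memLp_one_iff_integrable.1 (hui.memLp n)) hdrift μ n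
  have hrhs : C / (μ + d) + n * (μ / (μ + d) + ε) =
      (C + n * (μ + (μ + d) * ε)) / (μ + d) := by field_simp
  rw [hrhs, le_div_iff₀ hμd]
  linarith [hC n]

theorem pdc_deCusumInf_le_general [IsProbabilityMeasure P]
    (hadapt : ∀ n, Measurable[𝓕 (n + 1)] (ξ n)) (hui : UniformIntegrable ξ 1 P) (hμ : 0 ≤ μ)
    (hμd : 0 < μ + d) (hdrift : ∀ n, P[ξ n | 𝓕 n] ≤ᵐ[P] fun _ => -d) :
    limsup (fun γ : ℕ =>
        (∫⁻ ω, ({j : ℕ | j < γ - 1 ∧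
          0 ≤ deCusumInf (fun k => ξ k ω) μ j}.encard : ℝ≥0∞) ∂P) / (γ : ℝ≥0∞)) atTop ≤
      ENNReal.ofReal (μ / (μ + d)) := by
  have hcount (n : ℕ) : ∫⁻ ω, ({j : ℕ | j < n ∧
      0 ≤ deCusumInf (fun k => ξ k ω) μ j}.encard : ℝ≥0∞) ∂P =
        ENNReal.ofReal (∑ j ∈ Finset.range n, P.real (samplingEvent ξ μ j)) := by
    rw [ENNReal.ofReal_sum_of_nonneg fun _ _ => measureReal_nonneg]
    simp only [ofReal_measureReal (measure_ne_top P _)]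
    exact lintegral_encard_lt_and_mem
      (fun j => 𝓕.le j _ (measurableSet_samplingEvent hadapt μ j)) n
  simp_rw [hcount]
  refine limsup_ofReal_div_natCast_le fun ε hε => ?_
  obtain ⟨C, hC⟩ := exists_sum_measureReal_samplingEvent_le hadapt hui hμ hμd hdrift hε
  refine ⟨C, fun γ => le_trans ?_ (hC γ)⟩
  exact Finset.sum_le_sum_of_subset_of_nonneg (Finset.range_mono (Nat.sub_le γ 1))
    fun _ _ _ => measureReal_nonneg

end Drift

/-- The filtration whose σ-algebra at `i` is generated by the `ξ j` with `j < i`. Unlike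
`Filtration.natural` it leaves out the present value `ξ i`: the DE-CuSum statistic driven by `ξ`
is adapted to it, and independent increments are independent of it. -/
def strictPast {Ω ι β : Type*} [mΩ : MeasurableSpace Ω] [Preorder ι] [MeasurableSpace β]
    (ξ : ι → Ω → β) (hξ : ∀ i, Measurable (ξ i)) : Filtration ι mΩ where
  seq i := ⨆ j < i, MeasurableSpace.comap (ξ j) inferInstance
  mono' _ _ hij := biSup_mono fun _ hj => hj.trans_le hij
  le' _ := iSup₂_le fun j _ => (hξ j).comap_le

lemma measurable_strictPast_of_lt {Ω ι β : Type*} {_ : MeasurableSpace Ω} [Preorder ι]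
    [MeasurableSpace β] {ξ : ι → Ω → β} (hξ : ∀ i, Measurable (ξ i)) {i j : ι} (hji : j < i) :
    Measurable[strictPast ξ hξ i] (ξ j) :=
  measurable_iff_comap_le.2 <|
    le_iSup₂_of_le (f := fun j (_ : j < i) => MeasurableSpace.comap (ξ j) inferInstance)
      j hji le_rfl

lemma condExp_strictPast_ae_eq {Ω ι E : Type*} {mΩ : MeasurableSpace Ω} {P : Measure Ω}
    [Preorder ι] [NormedAddCommGroup E] [NormedSpace ℝ E] [CompleteSpace E]
    [SecondCountableTopology E] [MeasurableSpace E] [BorelSpace E] {ξ : ι → Ω → E}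
    (hξ : ∀ i, Measurable (ξ i)) (hindep : iIndepFun ξ P) (i : ι) :
    P[ξ i | strictPast ξ hξ i] =ᵐ[P] fun _ => P[ξ i] := by
  have := hindep.isProbabilityMeasure
  refine condExp_indep_eq (hξ i).comap_le (Filtration.le _ _)
    (comap_measurable (ξ i)).stronglyMeasurable ?_
  suffices Indep (⨆ j ∈ ({i} : Set ι), MeasurableSpace.comap (ξ j) inferInstance)
      (⨆ j ∈ Iio i, MeasurableSpace.comap (ξ j) inferInstance) P by
    rwa [iSup_singleton] at this
  exact indep_iSup_of_disjoint (fun j => (hξ j).comap_le) hindep (by simp)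

/-- For i.i.d. integrable increments with mean `-d < 0`, the pre-change duty cycle of the
DE-CuSum scheme with `h = ∞` (the sample at time `k` being taken iff `W_{k-1} ≥ 0`) satisfies
`limsup_{γ→∞} (1/γ) E[#{1 ≤ k ≤ γ-1 : W_{k-1} ≥ 0}] ≤ μ/(μ+d)`. -/
theorem pdc_deCusumInf_le {Ω : Type*} [MeasurableSpace Ω] (P : Measure Ω)
    [IsProbabilityMeasure P] (ξ : ℕ → Ω → ℝ) (hmeas : ∀ n, Measurable (ξ n))
    (hindep : iIndepFun ξ P)
    (hid : ∀ n, IdentDistrib (ξ n) (ξ 0) P P)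
    (hint : Integrable (ξ 0) P)
    (d μ : ℝ) (hd : 0 < d) (hμ : 0 < μ) (hmean : ∫ ω, ξ 0 ω ∂P = -d) :
    Filter.limsup (fun γ : ℕ =>
        (∫⁻ ω, (Set.encard {j : ℕ | j < γ - 1 ∧
          0 ≤ deCusumInf (fun k => ξ k ω) μ j} : ℝ≥0∞) ∂P) / (γ : ℝ≥0∞)) Filter.atTop ≤
      ENNReal.ofReal (μ / (μ + d)) :=
  pdc_deCusumInf_le_general (fun n => measurable_strictPast_of_lt hmeas n.lt_succ_self)
    (MemLp.uniformIntegrable_of_identDistrib le_rfl ENNReal.one_ne_top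
      (memLp_one_iff_integrable.2 hint) hid) hμ.le (add_pos hμ hd) fun n =>
    ((condExp_strictPast_ae_eq hmeas hindep n).trans
      (.of_forall fun _ => (hid n).integral_eq.trans hmean)).le
end
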